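/- arXiv:1812.09824 — 4 statements merged into one kernel-verified Lean document; each statement's English description precedes it below -/
import Mathlib

section
/- Let S be a stream of N items and run the Misra-Gries algorithm with capacity k = ⌈1/ε⌉ on S, where ε is a real with 1/N ≤ ε ≤ 1. Then for every item x ∈ U, the final table satisfies C[x] ≤ f_x and f_x < C[x] + εN. -/
/-!
Misra-Gries algorithm with capacity `k` over a stream `S : List U`.
The table is a function `C : U → ℕ` (finitely supported since `U` is a fintype).
-/

/-- One step of the Misra-Gries algorithm with capacity `k`:
if the arriving item has positive count, increment it; otherwise, if fewer
than `k` items have positive count, give it count 1; otherwise decrement every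
positive count (and discard the arriving item). -/
def mgStep {U : Type*} [Fintype U] [DecidableEq U] (k : ℕ) (C : U → ℕ) (a : U) : U → ℕ :=
  if 0 < C a then
    Function.update C a (C a + 1)
  else if (Finset.univ.filter fun y => 0 < C y).card < k then
    Function.update C a 1
  else
    fun y => C y - 1

/-- Running Misra-Gries with capacity `k` on the stream `S`, starting from the
all-zero table. -/
def mgRun {U : Type*} [Fintype U] [DecidableEq U] (k : ℕ) (S : List U) : U → ℕ :=
  S.foldl (mgStep k) fun _ => 0

/-!
Fix an item `x`. Every occurrence of `x` that the table misses is lost in a decrement step, and such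
a step wastes at least `k + 1` arrivals: the one it discards and one for each of the at least `k`
counters it lowers. Hence the undercount `f_x - C[x]` satisfies
`(k + 1) * (f_x - C[x]) + ∑ y, C[y] ≤ N`, and `ε * (k + 1) > 1` turns this into
`f_x - C[x] < ε * N`.
-/

theorem sum_sub_one_add_card_pos {ι : Type*} [Fintype ι] (f : ι → ℕ) :
    ∑ i, (f - 1) i + (Finset.univ.filter fun i => 0 < f i).card = ∑ i, f i := by
  rw [Finset.card_filter, ← Finset.sum_add_distrib]
  refine Finset.sum_congr rfl fun i _ => ?_
  rw [Pi.sub_apply, Pi.one_apply]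
  split_ifs <;> omega

section Step

variable {U : Type*} [Fintype U] [DecidableEq U] {k : ℕ} {C : U → ℕ} {a : U}

theorem mgStep_eq_add_count (h : 0 < C a ∨ (Finset.univ.filter fun y => 0 < C y).card < k) :
    mgStep k C a = fun y => C y + [a].count y := by
  have update_eq : Function.update C a (C a + 1) = fun y => C y + [a].count y := by
    ext y
    rcases eq_or_ne y a with rfl | hy
    · simp
    · simp [hy, hy.symm]
  by_cases ha : 0 < C a
  · rw [mgStep, if_pos ha, update_eq]
  · rw [mgStep, if_neg ha, if_pos (h.resolve_left ha), ← update_eq, Nat.eq_zero_of_not_pos ha]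

theorem mgStep_eq_sub_one (ha : C a = 0)
    (hk : k ≤ (Finset.univ.filter fun y => 0 < C y).card) :
    mgStep k C a = C - 1 := by
  rw [mgStep, if_neg ha.not_gt, if_neg hk.not_gt]
  rfl

variable (k C a) (x : U)

theorem mgStep_apply_le : mgStep k C a x ≤ C x + [a].count x := by
  by_cases h : 0 < C a ∨ (Finset.univ.filter fun y => 0 < C y).card < k
  · rw [mgStep_eq_add_count h]
  · push Not at h
    rw [mgStep_eq_sub_one (Nat.eq_zero_of_le_zero h.1) h.2]
    exact (Nat.sub_le _ _).trans (Nat.le_add_right _ _)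

/-- A step raises the potential `(k + 1) * (f_x - C[x]) + ∑ y, C[y]` by at most one; both sides are
moved so that no truncated subtraction occurs. -/
theorem mgStep_undercount_le :
    (k + 1) * (C x + [a].count x) + ∑ y, mgStep k C a y
      ≤ (k + 1) * mgStep k C a x + ∑ y, C y + 1 := by
  by_cases h : 0 < C a ∨ (Finset.univ.filter fun y => 0 < C y).card < k
  · have sum_count : ∑ y, [a].count y = 1 := by simp [List.count_singleton]
    rw [mgStep_eq_add_count h, Finset.sum_add_distrib, sum_count, add_assoc]
  · push Not at h
    obtain ⟨ha, hk⟩ := h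
    rw [Nat.le_zero] at ha
    rw [mgStep_eq_sub_one ha hk]
    have loss_le_one : C x + [a].count x ≤ (C - 1) x + 1 := by
      rcases eq_or_ne x a with rfl | hx
      · simp [ha]
      · rw [List.count_eq_zero_of_not_mem (mt List.mem_singleton.mp hx), add_zero]
        exact (le_tsub_add : C x ≤ C x - 1 + 1)
    have sum_drop := sum_sub_one_add_card_pos C
    calc (k + 1) * (C x + [a].count x) + ∑ y, (C - 1) y
        ≤ (k + 1) * ((C - 1) x + 1) + ∑ y, (C - 1) y := by gcongr
      _ = (k + 1) * (C - 1) x + (∑ y, (C - 1) y + k) + 1 := by ring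
      _ ≤ (k + 1) * (C - 1) x + ∑ y, C y + 1 := by gcongr; omega

end Step

section Run

variable {U : Type*} [Fintype U] [DecidableEq U] (k : ℕ) (S : List U) (x : U)

theorem foldl_mgStep_le_add_count (C : U → ℕ) :
    S.foldl (mgStep k) C x ≤ C x + S.count x := by
  induction S generalizing C with
  | nil => rfl
  | cons a S ih =>
    calc S.foldl (mgStep k) (mgStep k C a) x
        ≤ mgStep k C a x + S.count x := ih _
      _ ≤ C x + [a].count x + S.count x := by
          gcongr
          exact mgStep_apply_le k C a x
      _ = C x + (a :: S).count x := by rw [add_assoc, ← List.count_append, List.singleton_append]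

theorem foldl_mgStep_undercount_le (C : U → ℕ) :
    (k + 1) * (C x + S.count x) + ∑ y, S.foldl (mgStep k) C y
      ≤ (k + 1) * S.foldl (mgStep k) C x + ∑ y, C y + S.length := by
  induction S generalizing C with
  | nil => rfl
  | cons a S ih =>
    have tail_bound := ih (mgStep k C a)
    have step_bound := mgStep_undercount_le k C a x
    rw [List.foldl_cons, List.length_cons, ← List.singleton_append, List.count_append]
    linarith

theorem mgRun_le_count : mgRun k S x ≤ S.count x := by
  simpa only [mgRun, zero_add] using foldl_mgStep_le_add_count k S x fun _ => 0

theorem mgRun_undercount_le :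
    (k + 1) * S.count x + ∑ y, mgRun k S y ≤ (k + 1) * mgRun k S x + S.length := by
  simpa only [mgRun, zero_add, Finset.sum_const_zero, add_zero] using
    foldl_mgStep_undercount_le k S x fun _ => 0

theorem count_le_mgRun_add_length_div :
    (S.count x : ℝ) ≤ mgRun k S x + S.length / (k + 1) := by
  have undercount : (k + 1) * S.count x ≤ (k + 1) * mgRun k S x + S.length :=
    (Nat.le_add_right _ _).trans (mgRun_undercount_le k S x)
  have hk : (0 : ℝ) < k + 1 := by positivity
  rw [← sub_le_iff_le_add', le_div_iff₀' hk, mul_sub, sub_le_iff_le_add']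
  exact_mod_cast undercount

end Run

theorem misraGries_estimate_general {U : Type*} [Fintype U] [DecidableEq U]
    (S : List U) (hN : 0 < S.length) (ε : ℝ) (k : ℕ) (hk : 1 < ε * (k + 1)) (x : U) :
    mgRun k S x ≤ S.count x ∧
      (S.count x : ℝ) < (mgRun k S x : ℝ) + ε * (S.length : ℝ) := by
  refine ⟨mgRun_le_count k S x, (count_le_mgRun_add_length_div k S x).trans_lt ?_⟩
  have hN' : (0 : ℝ) < S.length := Nat.cast_pos.mpr hN
  gcongr
  calc (S.length : ℝ) / (k + 1) < ε * (k + 1) * S.length / (k + 1) := by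
        gcongr
        exact lt_mul_of_one_lt_left hN' hk
    _ = ε * S.length := by field_simp

/-- Running Misra-Gries with capacity `k = ⌈1/ε⌉` on a stream `S`
of `N` items, where `1/N ≤ ε ≤ 1`, the final table `C` satisfies
`C[x] ≤ f_x` and `f_x < C[x] + εN` for every item `x`. -/
theorem misraGries_estimate {U : Type*} [Fintype U] [DecidableEq U]
    (S : List U) (hN : 0 < S.length) (ε : ℝ)
    (hε₁ : 1 / (S.length : ℝ) ≤ ε) (hε₂ : ε ≤ 1)
    (k : ℕ) (hk : k = ⌈1 / ε⌉₊) :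
    ∀ x : U,
      mgRun k S x ≤ S.count x ∧
      (S.count x : ℝ) < (mgRun k S x : ℝ) + ε * (S.length : ℝ) := by
  have hε : 0 < ε := (one_div_pos.mpr (Nat.cast_pos.mpr hN)).trans_le hε₁
  have one_lt : 1 < ε * (k + 1) :=
    (div_lt_iff₀' hε).mp ((hk ▸ Nat.le_ceil (1 / ε)).trans_lt (lt_add_one (k : ℝ)))
  exact misraGries_estimate_general S hN ε k one_lt
end

section
/- Let S be a stream of N items and run the Misra-Gries algorithm with capacity k on S. Then the number of decrement steps performed during the entire run is at most ⌊N/(k+1)⌋; in particular, when k = ⌈1/ε⌉ for a real ε with 1/N ≤ ε ≤ 1, the number of decrement steps is strictly less than εN. -/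
/-- The number of decrement steps performed by the Misra-Gries algorithm with
capacity `k`, starting from table `C`, while processing the stream. -/
def mgDecs {U : Type*} [Fintype U] [DecidableEq U] (k : ℕ) : (U → ℕ) → List U → ℕ
  | _, [] => 0
  | C, a :: rest =>
      (if 0 < C a ∨ (Finset.univ.filter fun y => 0 < C y).card < k then 0 else 1)
        + mgDecs k (mgStep k C a) rest

/-!
Take the sum of all counts as a potential. Storing an item raises it by `1`, while a decrement step
finds at least `k` positive counts and so lowers it by at least `k`. Relative to the one unit of
growth allowed per item, every decrement step therefore wastes at least `k + 1` units, while the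
potential starts at `0` and never becomes negative.
-/

theorem sum_update_add {ι M : Type*} [DecidableEq ι] [AddCommMonoid M]
    {s : Finset ι} {i : ι} (hi : i ∈ s) (f : ι → M) (b : M) :
    ∑ j ∈ s, Function.update f i (f i + b) j = ∑ j ∈ s, f j + b := by
  rw [Finset.sum_update_of_mem hi, Finset.sdiff_singleton_eq_erase, add_right_comm,
    Finset.add_sum_erase s f hi]

theorem sum_tsub_one_add_card_filter_pos {ι : Type*} (s : Finset ι) (f : ι → ℕ) :
    ∑ i ∈ s, (f i - 1) + (s.filter fun i => 0 < f i).card = ∑ i ∈ s, f i := by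
  rw [Finset.card_filter, ← Finset.sum_add_distrib]
  refine Finset.sum_congr rfl fun i _ => ?_
  split_ifs <;> omega

section MisraGries

variable {U : Type*} [Fintype U] [DecidableEq U] {k : ℕ} {C : U → ℕ} {a : U}

theorem mgStep_of_pos_or_card_lt
    (h : 0 < C a ∨ (Finset.univ.filter fun y => 0 < C y).card < k) :
    mgStep k C a = Function.update C a (C a + 1) := by
  by_cases ha : 0 < C a
  · rw [mgStep, if_pos ha]
  · rw [mgStep, if_neg ha, if_pos (h.resolve_left ha), Nat.eq_zero_of_not_pos ha]

theorem mgStep_of_eq_zero_of_le_card (ha : C a = 0)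
    (hk : k ≤ (Finset.univ.filter fun y => 0 < C y).card) :
    mgStep k C a = fun y => C y - 1 := by
  rw [mgStep, if_neg ha.not_gt, if_neg hk.not_gt]

theorem sum_mgStep_of_pos_or_card_lt
    (h : 0 < C a ∨ (Finset.univ.filter fun y => 0 < C y).card < k) :
    ∑ y, mgStep k C a y = ∑ y, C y + 1 := by
  rw [mgStep_of_pos_or_card_lt h, sum_update_add (Finset.mem_univ a)]

theorem sum_mgStep_add_le_of_eq_zero_of_le_card (ha : C a = 0)
    (hk : k ≤ (Finset.univ.filter fun y => 0 < C y).card) :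
    ∑ y, mgStep k C a y + k ≤ ∑ y, C y := by
  rw [mgStep_of_eq_zero_of_le_card ha hk, ← sum_tsub_one_add_card_filter_pos Finset.univ C]
  gcongr

theorem mgDecs_cons_of_pos_or_card_lt (S : List U)
    (h : 0 < C a ∨ (Finset.univ.filter fun y => 0 < C y).card < k) :
    mgDecs k C (a :: S) = mgDecs k (mgStep k C a) S := by
  rw [mgDecs, if_pos h, zero_add]

theorem mgDecs_cons_of_eq_zero_of_le_card (S : List U) (ha : C a = 0)
    (hk : k ≤ (Finset.univ.filter fun y => 0 < C y).card) :
    mgDecs k C (a :: S) = 1 + mgDecs k (mgStep k C a) S := by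
  rw [mgDecs, if_neg (not_or.2 ⟨ha.not_gt, hk.not_gt⟩)]

variable (k C)

theorem mgDecs_mul_succ_le_length_add_sum (S : List U) :
    mgDecs k C S * (k + 1) ≤ S.length + ∑ y, C y := by
  induction S generalizing C with
  | nil => simp [mgDecs]
  | cons a S ih =>
    by_cases h : 0 < C a ∨ (Finset.univ.filter fun y => 0 < C y).card < k
    · calc mgDecs k C (a :: S) * (k + 1)
          = mgDecs k (mgStep k C a) S * (k + 1) := by rw [mgDecs_cons_of_pos_or_card_lt S h]
        _ ≤ S.length + ∑ y, mgStep k C a y := ih _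
        _ = (a :: S).length + ∑ y, C y := by
          rw [sum_mgStep_of_pos_or_card_lt h, List.length_cons]
          ring
    · obtain ⟨ha, hk⟩ : C a = 0 ∧ k ≤ (Finset.univ.filter fun y => 0 < C y).card := by
        simpa only [not_or, not_lt, Nat.le_zero] using h
      calc mgDecs k C (a :: S) * (k + 1)
          = mgDecs k (mgStep k C a) S * (k + 1) + (k + 1) := by
            rw [mgDecs_cons_of_eq_zero_of_le_card S ha hk]
            ring
        _ ≤ S.length + ∑ y, mgStep k C a y + (k + 1) := by
          gcongr
          exact ih _
        _ = (a :: S).length + (∑ y, mgStep k C a y + k) := by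
          rw [List.length_cons]
          ring
        _ ≤ (a :: S).length + ∑ y, C y := by
          gcongr
          exact sum_mgStep_add_le_of_eq_zero_of_le_card ha hk

theorem mgDecs_zero_le_length_div (S : List U) :
    mgDecs k (fun _ => 0) S ≤ S.length / (k + 1) := by
  rw [Nat.le_div_iff_mul_le k.succ_pos]
  simpa only [Finset.sum_const_zero, add_zero] using
    mgDecs_mul_succ_le_length_add_sum k (fun _ => 0) S

end MisraGries

theorem natCast_div_succ_lt_mul {K : Type*} [Field K] [LinearOrder K] [IsStrictOrderedRing K]
    {n k : ℕ} {ε : K} (hn : 0 < n) (hε : 1 < ε * (k + 1)) :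
    ((n / (k + 1) : ℕ) : K) < ε * n :=
  calc ((n / (k + 1) : ℕ) : K) ≤ n / (k + 1) := by exact_mod_cast Nat.cast_div_le
    _ < ε * n := by
      rw [div_lt_iff₀ k.cast_add_one_pos, mul_right_comm]
      exact lt_mul_of_one_lt_left (Nat.cast_pos.2 hn) hε

theorem misraGries_decrement_bound_general {U : Type*} [Fintype U] [DecidableEq U]
    (S : List U) (k : ℕ) :
    mgDecs k (fun _ => 0) S ≤ S.length / (k + 1) ∧
    (∀ ε : ℝ, 0 < S.length → 0 < ε → 1 / ε < k + 1 →
      (mgDecs k (fun _ => 0) S : ℝ) < ε * (S.length : ℝ)) := by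
  have hdiv := mgDecs_zero_le_length_div k S
  refine ⟨hdiv, fun ε hS hε hk => ?_⟩
  calc (mgDecs k (fun _ => 0) S : ℝ) ≤ (S.length / (k + 1) : ℕ) := by exact_mod_cast hdiv
    _ < ε * S.length := natCast_div_succ_lt_mul hS ((div_lt_iff₀' hε).1 hk)

/-- Running Misra-Gries with capacity `k` on a stream of `N` items,
the number of decrement steps is at most `⌊N/(k+1)⌋`; in particular, when
`k = ⌈1/ε⌉` with `1/N ≤ ε ≤ 1`, the number of decrement steps is strictly
less than `εN`. -/
theorem misraGries_decrement_bound {U : Type*} [Fintype U] [DecidableEq U]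
    (S : List U) (k : ℕ) (hk : 0 < k) :
    mgDecs k (fun _ => 0) S ≤ S.length / (k + 1) ∧
    (∀ ε : ℝ, 0 < S.length → 1 / (S.length : ℝ) ≤ ε → ε ≤ 1 → k = ⌈1 / ε⌉₊ →
      (mgDecs k (fun _ => 0) S : ℝ) < ε * (S.length : ℝ)) :=
  (misraGries_decrement_bound_general S k).imp_right fun h ε hS hNε _ hkε =>
    h ε hS ((by positivity : (0 : ℝ) < 1 / S.length).trans_le hNε)
      (hkε ▸ (Nat.le_ceil (1 / ε)).trans_lt (lt_add_one _))
end

section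
/- Let S be a stream of N items and run the external-memory Misra-Gries structure with in-memory capacity M, growth factor r > 1, and L levels on S, and let T > 0 be a real threshold. For each item x, call a rise of x a maximal interval of time steps during which C_0[x] > 0 and during which C_0[x] exceeds T at some moment. Then the total number of rises, summed over all items x, is at most ⌊N/T⌋. In particular, with T = (φ − 1/M)N for φ > 1/M, the total number of rises (and hence of triggered queries, one per rise) is at most M/(φM − 1). -/
/-!
The external-memory Misra-Gries structure: a cascade of Misra-Gries tables
`C_0, …, C_{L−1}`, where level `i` has capacity `cap i = r^i·M`.
-/

/-- Inserting an item `x` into level `i` of the external-memory Misra-Gries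
structure; `gas` is the number of remaining levels (`L − i`). If the arriving
item has positive count at level `i`, increment it; otherwise, if fewer than
`cap i` items have positive count at level `i`, give it count 1; otherwise
decrement every positive count at level `i`, discard the arriving item and
recursively insert one instance of each decremented item into level `i + 1`. -/
noncomputable def emInsert {U : Type*} [Fintype U] [DecidableEq U] (cap : ℕ → ℕ) :
    ℕ → ℕ → (ℕ → U → ℕ) → U → (ℕ → U → ℕ)
  | 0, _, T, _ => T
  | gas + 1, i, T, x =>
    if 0 < T i x then
      Function.update T i (Function.update (T i) x (T i x + 1))
    else if (Finset.univ.filter fun y => 0 < T i y).card < cap i then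
      Function.update T i (Function.update (T i) x 1)
    else
      ((Finset.univ.filter fun y => 0 < T i y).toList).foldl
        (fun Tc y => emInsert cap gas (i + 1) Tc y)
        (Function.update T i fun y => T i y - 1)

/-- Running the external-memory Misra-Gries structure with `L` levels and
level capacities `cap` on the stream `S` (each stream item is inserted into
level `0`), starting from all-zero tables. -/
noncomputable def emRun {U : Type*} [Fintype U] [DecidableEq U]
    (cap : ℕ → ℕ) (L : ℕ) (S : List U) : ℕ → U → ℕ :=
  S.foldl (fun T x => emInsert cap L 0 T x) fun _ _ => 0

/-- `Ĉ_j[x]`: the consolidated count of `x` over levels `0, …, j`. -/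
def emHat {U : Type*} (T : ℕ → U → ℕ) (j : ℕ) (x : U) : ℕ :=
  ∑ i ∈ Finset.range (j + 1), T i x


/-- `IsRise c N T x a b`: the time interval `[a, b]` is a *rise* of item `x`
for the level-0 count history `c` (where `c t x` is the level-0 count of `x`
after `t` stream items): a maximal interval of time steps during which the
level-0 count of `x` stays positive, and during which it exceeds `T` at some
moment. -/
def IsRise {U : Type*} (c : ℕ → U → ℕ) (N : ℕ) (T : ℝ) (x : U) (a b : ℕ) : Prop :=
  0 < a ∧ a ≤ b ∧ b ≤ N ∧
  (∀ t, a ≤ t → t ≤ b → 0 < c t x) ∧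
  c (a - 1) x = 0 ∧ (b = N ∨ c (b + 1) x = 0) ∧
  (∃ t, a ≤ t ∧ t ≤ b ∧ T < (c t x : ℝ))

/-!
An insertion raises the level-0 count of the arriving item by at most one and never raises the
count of another item. A rise of `x` starts from a level-0 count of zero and reaches a count above
`T`, so at least `T` copies of `x` arrive during it. Distinct rises of `x` are disjoint in time by
maximality, so `x` has at most `f_x / T` rises; summing over `x` gives the bound `N / T`.
-/

section Histories

variable {U : Type*} {c : ℕ → U → ℕ} {N : ℕ} {T : ℝ} {x : U}

/-- The set of rises of `x`, each encoded by its first and last time steps; its cardinality is the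
number of queries that `x` triggers. -/
def rises (c : ℕ → U → ℕ) (N : ℕ) (T : ℝ) (x : U) : Set (ℕ × ℕ) :=
  {p | IsRise c N T x p.1 p.2}

theorem rises_finite (c : ℕ → U → ℕ) (N : ℕ) (T : ℝ) (x : U) : (rises c N T x).Finite := by
  refine (Set.finite_Iic (N, N)).subset fun p hp => ?_
  obtain ⟨-, hab, hbN, -⟩ := hp
  exact ⟨hab.trans hbN, hbN⟩

namespace IsRise

variable {a b a' b' : ℕ}

theorem lt_of_left_lt (h : IsRise c N T x a b) (h' : IsRise c N T x a' b') (haa' : a < a') :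
    b < a' - 1 := by
  obtain ⟨-, -, -, hpos, -⟩ := h
  obtain ⟨-, -, -, -, hzero, -⟩ := h'
  by_contra! hle
  exact (hpos (a' - 1) (by lia) hle).ne' hzero

theorem right_le (h : IsRise c N T x a b) (h' : IsRise c N T x a b') : b ≤ b' := by
  obtain ⟨-, -, hbN, hpos, -⟩ := h
  obtain ⟨-, hab', -, -, -, hend | hend, -⟩ := h'
  · exact hbN.trans hend.ge
  · by_contra! hlt
    exact (hpos (b' + 1) (by lia) hlt).ne' hend

end IsRise

-- The rise `[a, b]` is produced by the steps `a - 1, …, b - 1`, where step `t` leads from time `t`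
-- to time `t + 1`.
theorem pairwiseDisjoint_rises_Ico :
    (rises c N T x).PairwiseDisjoint fun p => Finset.Ico (p.1 - 1) p.2 := by
  rintro ⟨a, b⟩ h ⟨a', b'⟩ h' hne
  refine Finset.disjoint_left.mpr fun t ht ht' => ?_
  simp only [Finset.mem_Ico] at ht ht'
  rcases lt_trichotomy a a' with hlt | rfl | hgt
  · have := h.lt_of_left_lt h' hlt
    lia
  · exact hne (Prod.ext rfl (le_antisymm (h.right_le h') (h'.right_le h)))
  · have := h'.lt_of_left_lt h hgt
    lia

variable [DecidableEq U] {S : List U}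

/-- The steps `t ∈ I` at which the stream `S` brings a copy of `x`. -/
def arrivals (S : List U) (x : U) (I : Finset ℕ) : Finset ℕ :=
  {t ∈ I | S[t]? = some x}

theorem card_arrivals_range (S : List U) (x : U) (n : ℕ) :
    (arrivals S x (Finset.range n)).card = (S.take n).count x := by
  induction n with
  | zero => simp [arrivals]
  | succ n ih =>
    rw [arrivals] at ih ⊢
    rw [Finset.range_add_one, Finset.filter_insert, List.take_add_one, List.count_append, ← ih]
    cases S[n]? <;> simp [apply_ite, List.count_singleton]

/-- A count history grows only through arrivals from the stream `S`: the step processing `S[t]`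
raises the count of `S[t]` by at most one and raises no other count. -/
def GrowsByArrivals (c : ℕ → U → ℕ) (S : List U) : Prop :=
  ∀ t x, c (t + 1) x ≤ c t x + if S[t]? = some x then 1 else 0

namespace GrowsByArrivals

theorem le_add_card_arrivals (hc : GrowsByArrivals c S) (x : U) {s t : ℕ} (hst : s ≤ t) :
    c t x ≤ c s x + (arrivals S x (Finset.Ico s t)).card := by
  simp only [arrivals, Finset.card_filter]
  induction t, hst using Nat.le_induction with
  | base => simp
  | succ t hst ih =>
    rw [Finset.sum_Ico_succ_top hst]
    have := hc t x
    lia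

theorem le_card_arrivals_of_isRise (hc : GrowsByArrivals c S) {a b : ℕ}
    (h : IsRise c N T x a b) : T ≤ (arrivals S x (Finset.Ico (a - 1) b)).card := by
  obtain ⟨-, -, -, -, hzero, -, t, hat, htb, hTt⟩ := h
  have hcount : c t x ≤ (arrivals S x (Finset.Ico (a - 1) b)).card := calc
    c t x ≤ c (a - 1) x + (arrivals S x (Finset.Ico (a - 1) t)).card :=
      hc.le_add_card_arrivals x (by lia)
    _ = (arrivals S x (Finset.Ico (a - 1) t)).card := by rw [hzero, zero_add]
    _ ≤ (arrivals S x (Finset.Ico (a - 1) b)).card :=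
      Finset.card_le_card (Finset.filter_subset_filter _ (Finset.Ico_subset_Ico_right htb))
  exact hTt.le.trans (mod_cast hcount)

theorem ncard_rises_mul_le_count (hc : GrowsByArrivals c S) (T : ℝ) (x : U) :
    (rises c S.length T x).ncard * T ≤ S.count x := by
  let R := (rises_finite c S.length T x).toFinset
  let A : ℕ × ℕ → Finset ℕ := fun p => arrivals S x (Finset.Ico (p.1 - 1) p.2)
  have hmem {p : ℕ × ℕ} (hp : p ∈ R) : IsRise c S.length T x p.1 p.2 :=
    (rises_finite c S.length T x).mem_toFinset.mp hp
  have hdisj : (R : Set (ℕ × ℕ)).PairwiseDisjoint A := by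
    intro p hp q hq hpq
    exact (pairwiseDisjoint_rises_Ico (hmem hp) (hmem hq) hpq).mono
      (Finset.filter_subset _ _) (Finset.filter_subset _ _)
  have hsub : R.biUnion A ⊆ arrivals S x (Finset.range S.length) := by
    refine Finset.biUnion_subset.mpr fun p hp => Finset.filter_subset_filter _ ?_
    obtain ⟨-, -, hbN, -⟩ := hmem hp
    exact fun t ht => Finset.mem_range.mpr ((Finset.mem_Ico.mp ht).2.trans_le hbN)
  have hcard : ∑ p ∈ R, (A p).card ≤ S.count x := calc
    ∑ p ∈ R, (A p).card = (R.biUnion A).card := (Finset.card_biUnion hdisj).symm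
    _ ≤ (arrivals S x (Finset.range S.length)).card := Finset.card_le_card hsub
    _ = S.count x := by rw [card_arrivals_range, List.take_length]
  calc ((rises c S.length T x).ncard : ℝ) * T = ∑ _p ∈ R, T := by
        rw [Set.ncard_eq_toFinset_card _ (rises_finite c S.length T x),
          Finset.sum_const, nsmul_eq_mul]
    _ ≤ ∑ p ∈ R, ((A p).card : ℝ) :=
        Finset.sum_le_sum fun p hp => hc.le_card_arrivals_of_isRise (hmem hp)
    _ ≤ S.count x := mod_cast hcard

theorem sum_ncard_rises_le_div [Fintype U] (hc : GrowsByArrivals c S) (hT : 0 < T) :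
    ∑ x, ((rises c S.length T x).ncard : ℝ) ≤ S.length / T := by
  have hcount : ∑ x, S.count x = S.length := by
    simpa only [Multiset.coe_count, Multiset.coe_card] using
      Multiset.sum_count_eq_card (m := (S : Multiset U)) fun x _ => Finset.mem_univ x
  rw [le_div_iff₀ hT, Finset.sum_mul]
  calc ∑ x, ((rises c S.length T x).ncard : ℝ) * T ≤ ∑ x, (S.count x : ℝ) :=
        Finset.sum_le_sum fun x _ => hc.ncard_rises_mul_le_count T x
    _ = S.length := mod_cast hcount

end GrowsByArrivals

end Histories

section MisraGries

variable {U : Type*} [Fintype U] [DecidableEq U] (cap : ℕ → ℕ)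

theorem emInsert_apply_of_lt (gas : ℕ) {i j : ℕ} (hji : j < i) (C : ℕ → U → ℕ) (x : U) :
    emInsert cap gas i C x j = C j := by
  induction gas generalizing i C x with
  | zero => rfl
  | succ gas ih =>
    rw [emInsert]
    split_ifs
    · exact Function.update_of_ne hji.ne _ _
    · exact Function.update_of_ne hji.ne _ _
    · exact List.foldlRecOn _ _ (motive := fun D => D j = C j) (Function.update_of_ne hji.ne _ _)
        fun D hD y _ => (ih (hji.trans i.lt_succ_self) D y).trans hD

theorem emInsert_apply_self_le (gas i : ℕ) (C : ℕ → U → ℕ) (x : U) :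
    emInsert cap gas i C x i ≤ C i + Pi.single x 1 := by
  cases gas with
  | zero => exact le_self_add
  | succ gas =>
    rw [emInsert]
    split_ifs 
    · rw [Function.update_self, update_le_iff]
      exact ⟨by simp, fun y _ => Nat.le_add_right _ _⟩
    · rw [Function.update_self, update_le_iff]
      exact ⟨by simp, fun y _ => Nat.le_add_right _ _⟩
    · refine List.foldlRecOn _ _
        (motive := fun D : ℕ → U → ℕ => D i ≤ C i + Pi.single x 1) ?_ fun D hD y _ => ?_
      · rw [Function.update_self]
        exact fun y => (Nat.sub_le _ _).trans (Nat.le_add_right _ _)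
      · rwa [emInsert_apply_of_lt cap gas i.lt_succ_self]

theorem growsByArrivals_emRun (L : ℕ) (S : List U) :
    GrowsByArrivals (fun t => emRun cap L (S.take t) 0) S := by
  intro t x
  beta_reduce
  rw [List.take_add_one]
  cases S[t]? with
  | none => simp
  | some y =>
    have := emInsert_apply_self_le cap L 0 (emRun cap L (S.take t)) y x
    simpa [emRun, List.foldl_append, Pi.single_apply, eq_comm] using this

end MisraGries

theorem emMisraGries_rises_bound_general {U : Type*} [Fintype U] [DecidableEq U]
    (S : List U) {M : ℝ} (hM : M ≠ 0) (L : ℕ) (cap : ℕ → ℕ) (T : ℝ) (hT : 0 < T) :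
    ((∑ x : U, (rises (fun t => emRun cap L (S.take t) 0) S.length T x).ncard : ℤ)
        ≤ ⌊(S.length : ℝ) / T⌋) ∧
    (∀ φ : ℝ, T = (φ - 1 / M) * (S.length : ℝ) →
      (∑ x : U, (rises (fun t => emRun cap L (S.take t) 0) S.length T x).ncard : ℝ)
        ≤ M / (φ * M - 1)) := by
  have hsum := (growsByArrivals_emRun cap L S).sum_ncard_rises_le_div hT
  refine ⟨Int.le_floor.mpr (mod_cast hsum), fun φ hφ => hsum.trans_eq ?_⟩
  have hTM : T * M = (φ * M - 1) * S.length := by rw [hφ]; field_simp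
  have hden : φ * M - 1 ≠ 0 := left_ne_zero_of_mul (hTM ▸ mul_ne_zero hT.ne' hM)
  rw [div_eq_div_iff hT.ne' hden]
  linarith

/-- Run the external-memory Misra-Gries structure with in-memory
capacity `M`, growth factor `r > 1` and `L` levels (level `i` having capacity
`r^i·M`, assumed integral) on a stream `S` of `N` items, and let `T > 0` be a
real threshold. The total number of rises of the level-0 count, summed over all
items, is at most `⌊N/T⌋`. In particular, with `T = (φ − 1/M)·N` for
`φ > 1/M`, the total number of rises (hence of triggered queries, one per rise)
is at most `M/(φM − 1)`. -/
theorem emMisraGries_rises_bound {U : Type*} [Fintype U] [DecidableEq U]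
    (S : List U) (M : ℕ) (hM : 1 ≤ M) (r : ℝ) (hr : 1 < r)
    (L : ℕ) (cap : ℕ → ℕ) (hcap : ∀ i < L, (cap i : ℝ) = r ^ i * (M : ℝ))
    (T : ℝ) (hT : 0 < T) :
    ((∑ x : U,
        {p : ℕ × ℕ |
          IsRise (fun t => emRun cap L (S.take t) 0) S.length T x p.1 p.2}.ncard : ℤ)
        ≤ ⌊(S.length : ℝ) / T⌋) ∧
    (∀ φ : ℝ, 1 / (M : ℝ) < φ → T = (φ - 1 / (M : ℝ)) * (S.length : ℝ) →
      ((∑ x : U,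
          {p : ℕ × ℕ |
            IsRise (fun t => emRun cap L (S.take t) 0) S.length T x p.1 p.2}.ncard : ℝ)
          ≤ (M : ℝ) / (φ * (M : ℝ) - 1))) := by
  have h := emMisraGries_rises_bound_general S (M := M) (by positivity) L cap T hT
  exact ⟨h.1, fun φ _ => h.2 φ⟩
end

section
/- Let S be a stream of N items whose frequencies satisfy the power-law tail bound with exponent θ > 1, let r > 1 and 0 < ε ≤ 1 with rεN ≥ 1, let L ≥ 1 be an integer, and define the level thresholds τ_L = (rεN)^{1/(θ−1)} and τ_i = r^{1/(θ−1)} τ_{i+1} for 1 ≤ i ≤ L−1. Then for every integer i with 1 ≤ i ≤ L−1, the number of distinct items x with f_x > Σ_{ℓ=i+1}^{L} τ_ℓ (the items pinned at level i) is at most 1/(r^{L−i} ε), i.e., at most half the size 2/(r^{L−i} ε) of level i; moreover, the number of distinct items x with f_x > τ_L is at most 1/(rε). -/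
/-!
The recursion gives `τ_i = (r^{L-i+1} ε N)^{1/(θ-1)}`, which is exactly the value of `c` for which
`N / c^{θ-1} = 1 / (r^{L-i+1} ε)`. All thresholds are nonnegative, so an item pinned at level `i`
has frequency above the single threshold `τ_{i+1}`, and the tail bound at a cutoff of at least
`τ_{i+1}` already gives `1 / (r^{L-i} ε)`.
-/

/-- The power-law tail bound with exponent `θ` for a total mass `N`. The number `T c` plays the role
of the number of distinct items of frequency greater than `c`; only its values at `c ≥ 1` matter. -/
def HasPowerLawTail (T : ℝ → ℝ) (N θ : ℝ) : Prop :=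
  ∀ c : ℝ, 1 ≤ c → T c ≤ N / c ^ (θ - 1)

theorem div_rpow_le_one_div {a N c p : ℝ} (ha : 0 < a) (hN : 0 ≤ N) (hp : 0 < p)
    (hc : (a * N) ^ (1 / p) ≤ c) : N / c ^ p ≤ 1 / a := by
  have haN : 0 ≤ a * N := by positivity
  have hc₀ : 0 ≤ c := (Real.rpow_nonneg haN _).trans hc
  have hcp : a * N ≤ c ^ p := by
    rwa [one_div, Real.rpow_inv_le_iff_of_pos haN hc₀ hp] at hc
  refine div_le_of_le_mul₀ (Real.rpow_nonneg hc₀ p) (one_div_pos.2 ha).le ?_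
  rwa [one_div_mul_eq_div, le_div_iff₀' ha]

theorem HasPowerLawTail.le_one_div {T : ℝ → ℝ} {N θ a c : ℝ} (hT : HasPowerLawTail T N θ)
    (hθ : 1 < θ) (ha : 0 < a) (haN : 1 ≤ a * N) (hc : (a * N) ^ (1 / (θ - 1)) ≤ c) :
    T c ≤ 1 / a := by
  have hp : 0 < θ - 1 := sub_pos.2 hθ
  have hN : 0 < N := pos_of_mul_pos_right (one_pos.trans_le haN) ha.le
  have hc₁ : 1 ≤ c := (Real.one_le_rpow haN (one_div_pos.2 hp).le).trans hc
  exact (hT c hc₁).trans (div_rpow_le_one_div ha hN.le hp hc)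

theorem eq_pow_mul_of_eq_mul_succ {M : Type*} [Monoid M] {q : M} {τ : ℕ → M} {m n i : ℕ}
    (hτ : ∀ j, m ≤ j → j < n → τ j = q * τ (j + 1)) (hmi : m ≤ i) (hin : i ≤ n) :
    τ i = q ^ (n - i) * τ n := by
  induction hin using Nat.decreasingInduction with
  | self => simp
  | of_succ k hkn ih =>
    rw [hτ k hmi hkn, ih (hmi.trans k.le_succ), ← mul_assoc, ← pow_succ', ← Nat.sub_sub,
      Nat.sub_add_cancel (Nat.sub_pos_of_lt hkn)]

section Thresholds

variable {r b q : ℝ} {τ : ℕ → ℝ} {m L i : ℕ}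

theorem threshold_eq_rpow (hr : 0 ≤ r) (hb : 0 ≤ b) (hτL : τ L = b ^ q)
    (hτ : ∀ j, m ≤ j → j < L → τ j = r ^ q * τ (j + 1)) (hmi : m ≤ i) (hiL : i ≤ L) :
    τ i = (r ^ (L - i) * b) ^ q := by
  rw [eq_pow_mul_of_eq_mul_succ hτ hmi hiL, hτL, Real.rpow_pow_comm hr,
    ← Real.mul_rpow (pow_nonneg hr _) hb]

theorem rpow_le_sum_threshold (hr : 0 ≤ r) (hb : 0 ≤ b) (hτL : τ L = b ^ q)
    (hτ : ∀ j, m ≤ j → j < L → τ j = r ^ q * τ (j + 1)) (hmi : m ≤ i) (hiL : i ≤ L) :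
    (r ^ (L - i) * b) ^ q ≤ ∑ ℓ ∈ Finset.Icc i L, τ ℓ := by
  have hτ_nonneg : ∀ ℓ ∈ Finset.Icc i L, 0 ≤ τ ℓ := by
    intro ℓ hℓ
    obtain ⟨hiℓ, hℓL⟩ := Finset.mem_Icc.1 hℓ
    rw [threshold_eq_rpow hr hb hτL hτ (hmi.trans hiℓ) hℓL]
    positivity
  rw [← threshold_eq_rpow hr hb hτL hτ hmi hiL]
  exact Finset.single_le_sum hτ_nonneg (Finset.left_mem_Icc.2 hiL)

end Thresholds

theorem powerLaw_pinned_items_general {T : ℝ → ℝ} {N θ r ε : ℝ} (hT : HasPowerLawTail T N θ)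
    (hθ : 1 < θ) (hr : 1 ≤ r) (hε : 0 < ε) (hrεN : 1 ≤ r * ε * N) {L : ℕ} {τ : ℕ → ℝ}
    (hτL : τ L = (r * ε * N) ^ (1 / (θ - 1)))
    (hτ : ∀ i, 1 ≤ i → i ≤ L - 1 → τ i = r ^ (1 / (θ - 1)) * τ (i + 1)) :
    (∀ i, 1 ≤ i → i ≤ L - 1 →
      T (∑ ℓ ∈ Finset.Icc (i + 1) L, τ ℓ) ≤ 1 / (r ^ (L - i) * ε)) ∧
    T (τ L) ≤ 1 / (r * ε) := by
  have hr₀ : 0 < r := one_pos.trans_le hr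
  refine ⟨fun i hi hiL => ?_, hT.le_one_div hθ (by positivity) hrεN hτL.ge⟩
  have hmass : r ^ (L - i) * ε * N = r ^ (L - (i + 1)) * (r * ε * N) := by
    rw [show L - i = L - (i + 1) + 1 by omega, pow_succ]
    ring
  refine hT.le_one_div hθ (by positivity) ?_ ?_ <;> rw [hmass]
  · exact one_le_mul_of_one_le_of_one_le (one_le_pow₀ hr) hrεN
  · exact rpow_le_sum_threshold hr₀.le (by positivity) hτL
      (fun j hj hjL => hτ j hj (Nat.le_sub_one_of_lt hjL)) (Nat.le_add_left 1 i) (by omega)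

/-- Let `S` be a stream of `N` items whose frequencies satisfy
the power-law tail bound with exponent `θ > 1` (for every real `c ≥ 1`, the
number of distinct items `x` with `f_x > c` is at most `N/c^{θ−1}`), let
`r > 1` and `0 < ε ≤ 1` with `rεN ≥ 1`, let `L ≥ 1` be an integer, and define
the level thresholds `τ_L = (rεN)^{1/(θ−1)}` and `τ_i = r^{1/(θ−1)}·τ_{i+1}`
for `1 ≤ i ≤ L−1`. Then for every `1 ≤ i ≤ L−1`, the number of distinct items
`x` with `f_x > Σ_{ℓ=i+1}^{L} τ_ℓ` (the items pinned at level `i`) is at most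
`1/(r^{L−i}·ε)`, i.e. at most half the size `2/(r^{L−i}·ε)` of level `i`;
moreover, the number of distinct items `x` with `f_x > τ_L` is at most
`1/(rε)`. -/
theorem powerLaw_pinned_items {U : Type*} [Fintype U] [DecidableEq U]
    (S : List U) (θ r ε : ℝ) (hθ : 1 < θ) (hr : 1 < r)
    (hε₀ : 0 < ε) (hε₁ : ε ≤ 1) (hrεN : 1 ≤ r * ε * (S.length : ℝ))
    (htail : ∀ c : ℝ, 1 ≤ c →
      ((Finset.univ.filter fun x : U => c < (S.count x : ℝ)).card : ℝ)
        ≤ (S.length : ℝ) / c ^ (θ - 1))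
    (L : ℕ) (hL : 1 ≤ L) (τ : ℕ → ℝ)
    (hτL : τ L = (r * ε * (S.length : ℝ)) ^ (1 / (θ - 1)))
    (hτ : ∀ i : ℕ, 1 ≤ i → i ≤ L - 1 → τ i = r ^ (1 / (θ - 1)) * τ (i + 1)) :
    (∀ i : ℕ, 1 ≤ i → i ≤ L - 1 →
      ((Finset.univ.filter fun x : U =>
          (∑ ℓ ∈ Finset.Icc (i + 1) L, τ ℓ) < (S.count x : ℝ)).card : ℝ)
        ≤ 1 / (r ^ (L - i) * ε)) ∧
    ((Finset.univ.filter fun x : U => τ L < (S.count x : ℝ)).card : ℝ)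
      ≤ 1 / (r * ε) := by
  exact powerLaw_pinned_items_general
    (T := fun c => ((Finset.univ.filter fun x : U => c < (S.count x : ℝ)).card : ℝ))
    htail hθ hr.le hε₀ hrεN hτL hτ
end
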